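/- arXiv:2012.00206 — 5 statements merged into one kernel-verified Lean document; each statement's English description precedes it below -/
import Mathlib

section
/- Let x > 0 and x' > 0 be real numbers and let μ be a probability measure on ℝ with μ([−x, x']ᶜ) = 0, satisfying the unbiasedness condition ∫ Δ dμ(Δ) = 0. Then ∫ |Δ| dμ(Δ) ≤ 2·x·x'/(x + x'). -/
open MeasureTheory

/-- For an unbiased wealth transfer `Δ` between agents with wealths `x` and `x'`,
distributed according to a probability measure supported on `[-x, x']` with zero mean,
the expected absolute transfer is at most `2 x x' / (x + x')`. -/
theorem abs_integral_le_of_unbiased (x x' : ℝ) (hx : 0 < x) (hx' : 0 < x')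
    (μ : Measure ℝ) [IsProbabilityMeasure μ] (hsupp : μ (Set.Icc (-x) x')ᶜ = 0)
    (hunb : (∫ Δ, Δ ∂μ) = 0) :
    (∫ Δ, |Δ| ∂μ) ≤ 2 * x * x' / (x + x') := by
  have hmem : ∀ᵐ Δ ∂μ, Δ ∈ Set.Icc (-x) x' := by
    rw [ae_iff]
    exact hsupp
  have hint : Integrable (fun Δ : ℝ => Δ) μ := Integrable.of_mem_Icc (-x) x' aemeasurable_id hmem
  have hs : 0 < x + x' := add_pos hx hx'
  -- On `[-x, x']` the convex function `|Δ|` lies below its chord.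
  have hchord : ∀ᵐ Δ ∂μ, |Δ| ≤ 2 * x * x' / (x + x') + (x' - x) / (x + x') * Δ := by
    filter_upwards [hmem] with Δ hΔ
    obtain ⟨h₁, h₂⟩ := hΔ
    rw [div_mul_eq_mul_div, ← add_div, le_div_iff₀ hs]
    rcases abs_cases Δ with ⟨h, _⟩ | ⟨h, _⟩ <;> rw [h] <;> nlinarith
  calc ∫ Δ, |Δ| ∂μ
      ≤ ∫ Δ, (2 * x * x' / (x + x') + (x' - x) / (x + x') * Δ) ∂μ :=
        integral_mono_ae hint.abs ((integrable_const _).add (hint.const_mul _)) hchord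
    _ = 2 * x * x' / (x + x') := by
        rw [integral_add (integrable_const _) (hint.const_mul _), integral_const_mul, hunb]
        simp
end

section
/- Let f be a wealth density with mean wealth m > 0, and let ω be an unbiased exchange kernel. Then for every x > 0, the mobility satisfies l(x) ≤ 2m. -/
open MeasureTheory

/-- A centred probability measure supported in `[a, b]` with `0 ≤ b` has mean absolute value
at most `2 * b`. -/
theorem integral_abs_le_two_mul_of_integral_eq_zero {μ : Measure ℝ} [IsProbabilityMeasure μ]
    {a b : ℝ} (hb : 0 ≤ b) (hsupp : μ (Set.Icc a b)ᶜ = 0) (hmean : ∫ t, t ∂μ = 0) :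
    ∫ t, |t| ∂μ ≤ 2 * b := by
  have hmem : ∀ᵐ t ∂μ, t ∈ Set.Icc a b := mem_ae_iff.mpr hsupp
  have hint : Integrable (fun t : ℝ => t) μ := Integrable.of_mem_Icc a b aemeasurable_id hmem
  calc ∫ t, |t| ∂μ = ∫ t, (|t| + t) ∂μ := by rw [integral_add hint.abs hint, hmean, add_zero]
    _ ≤ ∫ _, 2 * b ∂μ := by
      refine integral_mono_ae (hint.abs.add hint) (integrable_const _) ?_
      filter_upwards [hmem] with t ht
      rcases abs_cases t with h | h <;> linarith [ht.2]
    _ = 2 * b := by simp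

/-- In a system of unbiased binary exchanges, the mobility
`l(x) = ∫₀^∞ (∫ |Δ| d(ω x x')(Δ)) f(x') dx'` of agents with positive wealth `x`
is bounded by twice the mean wealth: `l(x) ≤ 2 m`. -/
theorem mobility_le_two_mul_mean
    -- `f` is a wealth density:
    (f : ℝ → ℝ) (hf_meas : Measurable f) (hf_nonneg : ∀ x, 0 ≤ f x)
    (hf_neg : ∀ x < 0, f x = 0)
    (hf_norm : (∫ x in Set.Ioi (0:ℝ), f x) = 1)
    -- with mean wealth `m > 0`:
    (m : ℝ) (hm_def : m = ∫ x in Set.Ioi (0:ℝ), x * f x) (hm_pos : 0 < m)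
    -- `ω` is an exchange kernel:
    (ω : ℝ → ℝ → Measure ℝ)
    (hω_prob : ∀ x x', 0 ≤ x → 0 ≤ x' → IsProbabilityMeasure (ω x x'))
    (hω_supp : ∀ x x', 0 ≤ x → 0 ≤ x' → (ω x x') (Set.Icc (-x) x')ᶜ = 0)
    -- which is unbiased:
    (hω_unb : ∀ x x', 0 ≤ x → 0 ≤ x' → (∫ Δ, Δ ∂(ω x x')) = 0)
    (x : ℝ) (hx : 0 < x) :
    (∫ x' in Set.Ioi (0:ℝ), (∫ Δ, |Δ| ∂(ω x x')) * f x') ≤ 2 * m := by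
  have hint : Integrable (fun x' => x' * f x') (volume.restrict (Set.Ioi 0)) :=
    Integrable.of_integral_ne_zero (hm_def ▸ hm_pos.ne')
  calc (∫ x' in Set.Ioi (0:ℝ), (∫ Δ, |Δ| ∂(ω x x')) * f x')
      ≤ ∫ x' in Set.Ioi (0:ℝ), 2 * (x' * f x') := by
        refine integral_mono_of_nonneg (ae_of_all _ fun x' =>
          mul_nonneg (integral_nonneg fun _ => abs_nonneg _) (hf_nonneg x')) (hint.const_mul 2) ?_
        filter_upwards [ae_restrict_mem measurableSet_Ioi] with x' hx'
        have hx'_nonneg : 0 ≤ x' := le_of_lt hx'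
        have := hω_prob x x' hx.le hx'_nonneg
        rw [← mul_assoc]
        exact mul_le_mul_of_nonneg_right
          (integral_abs_le_two_mul_of_integral_eq_zero hx'_nonneg
            (hω_supp x x' hx.le hx'_nonneg) (hω_unb x x' hx.le hx'_nonneg)) (hf_nonneg x')
    _ = 2 * m := by rw [integral_const_mul, hm_def]
end

section
/- Let f be a wealth density with mean wealth m > 0, and let ω be an unbiased exchange kernel. Then the mobility at zero wealth vanishes: l(0) = 0. In other words, x = 0 is an absorbing state of any system of unbiased binary exchanges. -/
open MeasureTheory

/-- A real function that is almost everywhere nonnegative and has zero integral has zero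
absolute integral. -/
theorem integral_abs_eq_zero_of_ae_nonneg {α : Type*} [MeasurableSpace α] {μ : Measure α}
    {g : α → ℝ} (hg : 0 ≤ᵐ[μ] g) (h : ∫ a, g a ∂μ = 0) : ∫ a, |g a| ∂μ = 0 := by
  rw [← h]
  exact integral_congr_ae (hg.mono fun _ ha => abs_of_nonneg ha)

/-- In a system of unbiased binary exchanges, the mobility at zero wealth vanishes:
`l(0) = 0`, i.e. `x = 0` is an absorbing state. -/
theorem mobility_at_zero_eq_zero
    -- `f` is a wealth density:
    (f : ℝ → ℝ) (hf_meas : Measurable f) (hf_nonneg : ∀ x, 0 ≤ f x)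
    (hf_neg : ∀ x < 0, f x = 0)
    (hf_norm : (∫ x in Set.Ioi (0:ℝ), f x) = 1)
    -- with mean wealth `m > 0`:
    (m : ℝ) (hm_def : m = ∫ x in Set.Ioi (0:ℝ), x * f x) (hm_pos : 0 < m)
    -- `ω` is an exchange kernel:
    (ω : ℝ → ℝ → Measure ℝ)
    (hω_prob : ∀ x x', 0 ≤ x → 0 ≤ x' → IsProbabilityMeasure (ω x x'))
    (hω_supp : ∀ x x', 0 ≤ x → 0 ≤ x' → (ω x x') (Set.Icc (-x) x')ᶜ = 0)
    -- which is unbiased: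
    (hω_unb : ∀ x x', 0 ≤ x → 0 ≤ x' → (∫ Δ, Δ ∂(ω x x')) = 0) :
    (∫ x' in Set.Ioi (0:ℝ), (∫ Δ, |Δ| ∂(ω 0 x')) * f x') = 0 := by
  refine setIntegral_eq_zero_of_forall_eq_zero fun x' hx' => ?_
  have hx : 0 ≤ x' := le_of_lt hx'
  rw [integral_abs_eq_zero_of_ae_nonneg ?_ (hω_unb 0 x' le_rfl hx), zero_mul]
  have hsupp : ∀ᵐ Δ ∂(ω 0 x'), Δ ∈ Set.Icc (-0) x' := hω_supp 0 x' le_rfl hx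
  filter_upwards [hsupp] with Δ hΔ
  simpa using hΔ.1
end

section
/- Let f be a wealth density with mean wealth m > 0, and let ω be an unbiased exchange kernel. Then the Gini production functional D = ∫₀^∞ ∫₀^∞ ∫₀^∞ f(x)·f(x')·f(x₁) · [ (∫ |x + Δ − x₁| d(ω x x')(Δ)) − |x − x₁| ] dx₁ dx' dx is nonnegative: D ≥ 0. -/
open MeasureTheory

/-- Adding centred integrable noise to a constant does not decrease the mean absolute value. -/
theorem abs_le_integral_abs_add_of_integral_eq_zero {μ : Measure ℝ} [IsProbabilityMeasure μ]
    (hint : Integrable (fun t : ℝ => t) μ) (hmean : ∫ t, t ∂μ = 0) (a : ℝ) :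
    |a| ≤ ∫ t, |a + t| ∂μ := by
  calc |a| = |∫ t, (a + t) ∂μ| := by
        rw [integral_add (integrable_const a) hint, hmean]; simp
    _ ≤ ∫ t, |a + t| ∂μ := abs_integral_le_integral_abs

/-- The identity is integrable for a finite measure carried by a compact interval. -/
theorem integrable_id_of_measure_compl_Icc_eq_zero {μ : Measure ℝ} [IsFiniteMeasure μ] {a b : ℝ}
    (h : μ (Set.Icc a b)ᶜ = 0) : Integrable (fun t : ℝ => t) μ :=
  Integrable.of_mem_Icc a b aemeasurable_id (mem_ae_iff.mpr h)

/-- The Gini production functional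
`D = ∫₀^∞∫₀^∞∫₀^∞ f(x) f(x') f(x₁) [(∫ |x+Δ-x₁| d(ω x x')(Δ)) - |x-x₁|] dx₁ dx' dx`
of a wealth density `f` under an unbiased exchange kernel `ω` is nonnegative. -/
theorem gini_production_nonneg
    -- `f` is a wealth density:
    (f : ℝ → ℝ) (hf_meas : Measurable f) (hf_nonneg : ∀ x, 0 ≤ f x)
    (hf_neg : ∀ x < 0, f x = 0)
    (hf_norm : (∫ x in Set.Ioi (0:ℝ), f x) = 1)
    -- with mean wealth `m > 0`:
    (m : ℝ) (hm_def : m = ∫ x in Set.Ioi (0:ℝ), x * f x) (hm_pos : 0 < m)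
    -- `ω` is an exchange kernel:
    (ω : ℝ → ℝ → Measure ℝ)
    (hω_prob : ∀ x x', 0 ≤ x → 0 ≤ x' → IsProbabilityMeasure (ω x x'))
    (hω_supp : ∀ x x', 0 ≤ x → 0 ≤ x' → (ω x x') (Set.Icc (-x) x')ᶜ = 0)
    -- which is unbiased:
    (hω_unb : ∀ x x', 0 ≤ x → 0 ≤ x' → (∫ Δ, Δ ∂(ω x x')) = 0) :
    0 ≤ ∫ x in Set.Ioi (0:ℝ), ∫ x' in Set.Ioi (0:ℝ), ∫ x₁ in Set.Ioi (0:ℝ),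
          f x * f x' * f x₁ * ((∫ Δ, |x + Δ - x₁| ∂(ω x x')) - |x - x₁|) := by
  refine setIntegral_nonneg measurableSet_Ioi fun x hx => ?_
  refine setIntegral_nonneg measurableSet_Ioi fun x' hx' => ?_
  refine setIntegral_nonneg measurableSet_Ioi fun x₁ _ => ?_
  have hx0 : 0 ≤ x := le_of_lt hx
  have hx0' : 0 ≤ x' := le_of_lt hx'
  have := hω_prob x x' hx0 hx0'
  have jensen := abs_le_integral_abs_add_of_integral_eq_zero
    (integrable_id_of_measure_compl_Icc_eq_zero (hω_supp x x' hx0 hx0'))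
    (hω_unb x x' hx0 hx0') (x - x₁)
  simp only [sub_add_eq_add_sub] at jensen
  exact mul_nonneg (mul_nonneg (mul_nonneg (hf_nonneg x) (hf_nonneg x')) (hf_nonneg x₁))
    (sub_nonneg.mpr jensen)
end

section
/- Let f be a wealth density with mean wealth m > 0, and let ω be an unbiased exchange kernel. Then the liquidity L = (1/(2m)) ∫₀^∞ l(x) · f(x) dx satisfies 0 ≤ L ≤ 1, where l(x) = ∫₀^∞ (∫ |Δ| d(ω x x')(Δ)) · f(x') dx' is the mobility. -/
open MeasureTheory

/-- A probability measure carried by `[-x, x']` has first absolute moment at most `x + x'`. -/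
lemma integral_abs_le_add_of_measure_compl_Icc_eq_zero {μ : Measure ℝ} [IsProbabilityMeasure μ]
    {x x' : ℝ} (hx : 0 ≤ x) (hx' : 0 ≤ x') (hμ : μ (Set.Icc (-x) x')ᶜ = 0) :
    ∫ Δ, |Δ| ∂μ ≤ x + x' := by
  have h : ∫ Δ, |Δ| ∂μ ≤ ∫ _, (x + x') ∂μ := by
    refine integral_mono_of_nonneg (.of_forall fun Δ => abs_nonneg Δ) (integrable_const _) ?_
    filter_upwards [mem_ae_iff.mpr hμ] with Δ hΔ
    exact abs_le.mpr ⟨by linarith [hΔ.1], by linarith [hΔ.2]⟩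
  simpa using h

/-- The liquidity `L = (1/(2m)) ∫₀^∞ l(x) f(x) dx` of a wealth density `f` under an
unbiased exchange kernel `ω`, where `l` is the mobility, satisfies `0 ≤ L ≤ 1`. -/
theorem liquidity_mem_unit_interval
    -- `f` is a wealth density:
    (f : ℝ → ℝ) (hf_meas : Measurable f) (hf_nonneg : ∀ x, 0 ≤ f x)
    (hf_neg : ∀ x < 0, f x = 0)
    (hf_norm : (∫ x in Set.Ioi (0:ℝ), f x) = 1)
    -- with mean wealth `m > 0`:
    (m : ℝ) (hm_def : m = ∫ x in Set.Ioi (0:ℝ), x * f x) (hm_pos : 0 < m)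
    -- `ω` is an exchange kernel:
    (ω : ℝ → ℝ → Measure ℝ)
    (hω_prob : ∀ x x', 0 ≤ x → 0 ≤ x' → IsProbabilityMeasure (ω x x'))
    (hω_supp : ∀ x x', 0 ≤ x → 0 ≤ x' → (ω x x') (Set.Icc (-x) x')ᶜ = 0)
    -- which is unbiased:
    (hω_unb : ∀ x x', 0 ≤ x → 0 ≤ x' → (∫ Δ, Δ ∂(ω x x')) = 0)
    -- the mobility `l`:
    (l : ℝ → ℝ)
    (hl_def : ∀ x, l x = ∫ x' in Set.Ioi (0:ℝ), (∫ Δ, |Δ| ∂(ω x x')) * f x')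
    -- the liquidity `L`:
    (L : ℝ)
    (hL_def : L = (1 / (2 * m)) * ∫ x in Set.Ioi (0:ℝ), l x * f x) :
    0 ≤ L ∧ L ≤ 1 := by
  have hf_int : IntegrableOn f (Set.Ioi 0) :=
    Integrable.of_integral_ne_zero (by rw [hf_norm]; exact one_ne_zero)
  have hxf_int : IntegrableOn (fun x => x * f x) (Set.Ioi 0) :=
    Integrable.of_integral_ne_zero (by rw [← hm_def]; exact hm_pos.ne')
  have hl_nonneg : ∀ x, 0 ≤ l x := fun x => by
    rw [hl_def]
    exact integral_nonneg fun x' =>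
      mul_nonneg (integral_nonneg fun Δ => abs_nonneg Δ) (hf_nonneg x')
  have hl_le : ∀ x, 0 ≤ x → l x ≤ x + m := by
    intro x hx
    calc l x ≤ ∫ x' in Set.Ioi (0:ℝ), (x * f x' + x' * f x') := by
          rw [hl_def]
          refine integral_mono_of_nonneg (.of_forall fun x' =>
            mul_nonneg (integral_nonneg fun Δ => abs_nonneg Δ) (hf_nonneg x'))
            ((hf_int.const_mul x).add hxf_int) ?_
          filter_upwards [ae_restrict_mem measurableSet_Ioi] with x' hx'
          have hx'_nonneg : 0 ≤ x' := le_of_lt hx'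
          have := hω_prob x x' hx hx'_nonneg
          rw [← add_mul]
          exact mul_le_mul_of_nonneg_right
            (integral_abs_le_add_of_measure_compl_Icc_eq_zero hx hx'_nonneg
              (hω_supp x x' hx hx'_nonneg)) (hf_nonneg x')
      _ = x + m := by
          rw [integral_add (hf_int.const_mul x) hxf_int, integral_const_mul, hf_norm, ← hm_def,
            mul_one]
  have h_total_nonneg : 0 ≤ ∫ x in Set.Ioi (0:ℝ), l x * f x :=
    integral_nonneg fun x => mul_nonneg (hl_nonneg x) (hf_nonneg x)
  have h_total_le : ∫ x in Set.Ioi (0:ℝ), l x * f x ≤ 2 * m := by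
    calc ∫ x in Set.Ioi (0:ℝ), l x * f x ≤ ∫ x in Set.Ioi (0:ℝ), (x * f x + m * f x) := by
          refine integral_mono_of_nonneg (.of_forall fun x =>
            mul_nonneg (hl_nonneg x) (hf_nonneg x)) (hxf_int.add (hf_int.const_mul m)) ?_
          filter_upwards [ae_restrict_mem measurableSet_Ioi] with x hx
          rw [← add_mul]
          exact mul_le_mul_of_nonneg_right (hl_le x (le_of_lt hx)) (hf_nonneg x)
      _ = 2 * m := by
          rw [integral_add hxf_int (hf_int.const_mul m), integral_const_mul, hf_norm, ← hm_def]
          ring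
  rw [hL_def, one_div_mul_eq_div]
  exact ⟨by positivity, (div_le_one (by positivity)).mpr h_total_le⟩
end
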